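/- Let J ⊂ ℝ be an open interval containing q_c, and let F⁺, F⁻ : J × ℝ × ℝ → ℝ be C³ functions satisfying the parity relations F⁺(q,m,−d) = F⁺(q,m,d) and F⁻(q,m,−d) = −F⁻(q,m,d) for all (q,m,d). Let m₀ : J → ℝ be a C³ function with F⁺(q, m₀(q), 0) = 0 for all q ∈ J. Define α(q) = ∂_m F⁺(q, m₀(q), 0), μ(q) = ∂_d F⁻(q, m₀(q), 0), and β_eff(q) = (1/6) ∂_d³ F⁻(q, m₀(q), 0) − ∂_m∂_d F⁻(q, m₀(q), 0) · ∂_d² F⁺(q, m₀(q), 0) / (2 α(q)). Assume α(q_c) ≠ 0, μ(q_c) = 0, μ'(q_c) ≠ 0, and β_eff(q_c) < 0. Then there exist an open interval I ∋ q_c and a neighborhood U of (m₀(q_c), 0) in ℝ² such that for every q ∈ I: if μ(q) < 0 then the only solution (m,d) ∈ U of the system F⁺(q,m,d) = 0, F⁻(q,m,d) = 0 is (m₀(q), 0); if μ(q) > 0 then this system has exactly three solutions in U, namely (m₀(q),0) and two points (m₊(q), d₊(q)), (m₋(q), d₋(q)) with d_±(q) = ±√(−μ(q)/β_eff(q)) +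 o(√(μ(q))) and m_±(q) = m₀(q) + O(μ(q)) as q → q_c. -/

import Mathlib

open MeasureTheory Set Filter Asymptotics

/-!
Write `F⁻ = d · H(q, m, d)`, where `H(q, m, ·)` is `dslope (Fm q m) 0`, so `H(q, m, 0) = ∂_d F⁻`.
By parity, `F⁺` and `H` behave like C¹ functions of `(m, s)` with `s = d²`, and mean value theorems
give exact difference formulas between two points of the half-plane `d ≥ 0` (`exists_coeffs`):

  `ΔF⁺ = ∂_m F⁺ · Δm + (∂_d² F⁺ / 2) · Δs`,  `ΔH = ∂_m ∂_d F⁻ · Δm + (∂_d³ F⁻ / 6) · Δs`,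

the coefficients being evaluated at nearby intermediate points. If `F⁺` vanishes at both points,
eliminating `Δm` yields `ΔH = D · Δs` and `|Δm| ≤ K · Δs` with `D` as close to `β_eff(q_c)` as
desired (`comparison`). No derivative of an implicitly defined branch is needed.

Everything follows from this comparison (`pitchfork_core`). Against `(m₀(q), 0)`, where `H = μ(q)`,
a zero with `d > 0` satisfies `-μ(q) = D d²`: this excludes `μ(q) ≤ 0` and gives the amplitude,
while `|m - m₀(q)| ≤ K d² = O(μ(q))`. Two zeros with `d > 0` have `D · Δs = 0`, hence coincide.
For existence, the implicit function theorem gives zeros `M(d)` of `F⁺(q, ·, d)`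
(`exists_zero_near`); along them `H` is Lipschitz by the comparison, equals `μ(q) > 0` at `d = 0`
and is negative at a fixed `δ` once `μ(q)` is small, so it vanishes in between. Zeros with `d < 0`
are reflections of those with `d > 0`.
-/

/-! ### Mean value formulas for even and odd functions of one variable -/

lemma deriv_odd_of_even {f : ℝ → ℝ} (hev : ∀ x, f (-x) = f x) (x : ℝ) :
    deriv f (-x) = -deriv f x := by
  have h : (fun y => f (-y)) = f := funext hev
  have h1 := deriv_comp_neg f (-x)
  rw [h, neg_neg] at h1
  exact h1

lemma deriv_even_of_odd {f : ℝ → ℝ} (hodd : ∀ x, f (-x) = -f x) (x : ℝ) :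
    deriv f (-x) = deriv f x := by
  have h : (fun y => f (-y)) = fun y => -f y := funext hodd
  have h1 := deriv_comp_neg f (-x)
  rw [h, neg_neg, deriv.fun_neg, neg_inj] at h1
  exact h1

lemma eq_zero_of_odd {f : ℝ → ℝ} (hodd : ∀ x, f (-x) = -f x) : f 0 = 0 := by
  have := hodd 0
  rw [neg_zero] at this
  linarith

lemma exists_mem_Ioo_eq_mul_deriv {g : ℝ → ℝ} (hg : Differentiable ℝ g) (h0 : g 0 = 0)
    {x : ℝ} (hx : 0 < x) : ∃ ξ ∈ Ioo 0 x, g x = x * deriv g ξ := by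
  obtain ⟨ξ, hξ, h⟩ := exists_deriv_eq_slope g hx hg.continuous.continuousOn hg.differentiableOn
  refine ⟨ξ, hξ, ?_⟩
  rw [h, h0, sub_zero, sub_zero]
  field_simp

/-- For an even C² function the mean value theorem holds in the variable `x²`: Cauchy's theorem
against `x²` leaves `f'(ξ) / (2ξ)`, and `f'(0) = 0`. -/
lemma even_sub_eq {f : ℝ → ℝ} (hf : ContDiff ℝ 2 f) (hev : ∀ x, f (-x) = f x) {x y : ℝ}
    (hx : 0 ≤ x) (hxy : x ≤ y) :
    ∃ η ∈ Icc 0 y, f y - f x = deriv (deriv f) η / 2 * (y ^ 2 - x ^ 2) := by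
  rcases hxy.eq_or_lt with rfl | hlt
  · exact ⟨0, ⟨le_rfl, hx⟩, by ring⟩
  have hd : Differentiable ℝ f := hf.differentiable (by norm_num)
  have hd1 : Differentiable ℝ (deriv f) :=
    (show ContDiff ℝ 1 (deriv f) from hf.deriv').differentiable (by norm_num)
  obtain ⟨ξ, hξ, h⟩ := exists_ratio_hasDerivAt_eq_ratio_slope f (deriv f) hlt
    hd.continuous.continuousOn (fun t _ => (hd t).hasDerivAt) (fun t => t ^ 2) (fun t => 2 * t)
    (by fun_prop) (fun t _ => by simpa using hasDerivAt_pow 2 t)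
  have hξ0 : 0 < ξ := hx.trans_lt hξ.1
  obtain ⟨η, hη, h'⟩ := exists_mem_Ioo_eq_mul_deriv hd1
    (eq_zero_of_odd (deriv_odd_of_even hev)) hξ0
  refine ⟨η, ⟨hη.1.le, (hη.2.trans hξ.2).le⟩, ?_⟩
  rw [h'] at h
  have : ξ * (f y - f x - deriv (deriv f) η / 2 * (y ^ 2 - x ^ 2)) = 0 := by linarith
  rcases mul_eq_zero.1 this with h0 | h0
  · exact absurd h0 hξ0.ne'
  · linarith

/-- For an odd C³ function `k`, the mean value theorem in the variable `x²` for `k(x) / x`, extended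
by `k'(0)` at `0`. -/
lemma odd_dslope_sub_eq {k : ℝ → ℝ} (hk : ContDiff ℝ 3 k) (hodd : ∀ x, k (-x) = -k x) {x y : ℝ}
    (hx : 0 ≤ x) (hxy : x ≤ y) :
    ∃ η ∈ Icc 0 y, dslope k 0 y - dslope k 0 x =
      deriv (deriv (deriv k)) η / 6 * (y ^ 2 - x ^ 2) := by
  rcases hxy.eq_or_lt with rfl | hlt
  · exact ⟨0, ⟨le_rfl, hx⟩, by ring⟩
  have hk1 : ContDiff ℝ 2 (deriv k) := hk.deriv'
  have hk2 : ContDiff ℝ 1 (deriv (deriv k)) := hk1.deriv'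
  have hd : Differentiable ℝ k := hk.differentiable (by norm_num)
  have hd1 : Differentiable ℝ (deriv k) := hk1.differentiable (by norm_num)
  have hd2 : Differentiable ℝ (deriv (deriv k)) := hk2.differentiable (by norm_num)
  have hk0 := eq_zero_of_odd hodd
  have hcont : Continuous (dslope k 0) := continuous_iff_continuousAt.2 fun t => by
    by_cases ht : t = 0
    · subst ht; exact continuousAt_dslope_same.2 (hd 0)
    · exact (continuousAt_dslope_of_ne ht).2 hd.continuous.continuousAt
  have hder : ∀ t ∈ Ioo x y,
      HasDerivAt (dslope k 0) ((deriv k t * t - k t) / t ^ 2) t := fun t ht => by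
    have ht0 : t ≠ 0 := (hx.trans_lt ht.1).ne'
    have h1 : HasDerivAt (fun s => k s / s) ((deriv k t * t - k t * 1) / t ^ 2) t :=
      (hd t).hasDerivAt.div (hasDerivAt_id t) ht0
    rw [mul_one] at h1
    refine h1.congr_of_eventuallyEq ?_
    filter_upwards [isOpen_ne.mem_nhds ht0] with s hs
    rw [dslope_of_ne _ hs, slope_def_field, hk0, sub_zero, sub_zero]
  -- Cauchy's theorem for `k(t) / t` against `t²`, then for `t k'(t) - k(t)` against `t³`, and
  -- finally the mean value theorem for `k''`, which vanishes at `0`.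
  obtain ⟨ξ, hξ, h⟩ := exists_ratio_hasDerivAt_eq_ratio_slope (dslope k 0) _ hlt
    hcont.continuousOn hder (fun t => t ^ 2) (fun t => 2 * t)
    (by fun_prop) (fun t _ => by simpa using hasDerivAt_pow 2 t)
  have hξ0 : 0 < ξ := hx.trans_lt hξ.1
  obtain ⟨η, hη, h'⟩ := exists_ratio_hasDerivAt_eq_ratio_slope (fun t => deriv k t * t - k t)
    (fun t => deriv (deriv k) t * t) hξ0
    ((hd1.continuous.mul continuous_id).sub hd.continuous).continuousOn
    (fun t _ => by
      have := ((hd1 t).hasDerivAt.mul (hasDerivAt_id t)).sub (hd t).hasDerivAt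
      exact this.congr_deriv (by simp only [id]; ring)) (fun t => t ^ 3) (fun t => 3 * t ^ 2)
    (by fun_prop) (fun t _ => by simpa using hasDerivAt_pow 3 t)
  obtain ⟨ζ, hζ, h''⟩ := exists_mem_Ioo_eq_mul_deriv hd2
    (eq_zero_of_odd (deriv_odd_of_even (deriv_even_of_odd hodd))) hη.1
  refine ⟨ζ, ⟨hζ.1.le, (hζ.2.trans (hη.2.trans hξ.2)).le⟩, ?_⟩
  rw [h''] at h'
  have hη0 := hη.1
  have e1 : deriv k ξ * ξ - k ξ = ξ ^ 3 * deriv (deriv (deriv k)) ζ / 3 := by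
    have : η ^ 2 * (deriv k ξ * ξ - k ξ - ξ ^ 3 * deriv (deriv (deriv k)) ζ / 3) = 0 := by
      simp only [hk0] at h'
      linarith
    rcases mul_eq_zero.1 this with h0 | h0
    · exact absurd h0 (by positivity)
    · linarith
  rw [e1] at h
  have : ξ * (dslope k 0 y - dslope k 0 x -
      deriv (deriv (deriv k)) ζ / 6 * (y ^ 2 - x ^ 2)) = 0 := by
    have e2 : ξ ^ 3 * deriv (deriv (deriv k)) ζ / 3 / ξ ^ 2 =
        ξ * deriv (deriv (deriv k)) ζ / 3 := by field_simp
    rw [e2] at h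
    linarith
  rcases mul_eq_zero.1 this with h0 | h0
  · exact absurd h0 hξ0.ne'
  · linarith

/-! ### Partial derivatives -/

/-- The partial derivative `∂_m G` of a function `G q m d`. -/
noncomputable def dM (G : ℝ → ℝ → ℝ → ℝ) : ℝ → ℝ → ℝ → ℝ := fun q m d => deriv (fun t => G q t d) m

/-- The partial derivative `∂_d G` of a function `G q m d`. -/
noncomputable def dD (G : ℝ → ℝ → ℝ → ℝ) : ℝ → ℝ → ℝ → ℝ := fun q m d => deriv (fun t => G q m t) d

lemma contDiffOn_dM {G : ℝ → ℝ → ℝ → ℝ} {S : Set (ℝ × ℝ × ℝ)} (hS : IsOpen S) {n : ℕ}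
    (hG : ContDiffOn ℝ (n + 1) (fun p : ℝ × ℝ × ℝ => G p.1 p.2.1 p.2.2) S) :
    ContDiffOn ℝ n (fun p : ℝ × ℝ × ℝ => dM G p.1 p.2.1 p.2.2) S := by
  have h := (hG.fderiv_of_isOpen hS le_rfl).clm_apply
    (contDiffOn_const (c := ((0, 1, 0) : ℝ × ℝ × ℝ)))
  refine h.congr fun p hp => ?_
  have h1 : HasFDerivAt (fun p : ℝ × ℝ × ℝ => G p.1 p.2.1 p.2.2) _ (p.1, p.2.1, p.2.2) :=
    ((hG.differentiableOn (by norm_num)).differentiableAt (hS.mem_nhds hp)).hasFDerivAt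
  have h2 : HasDerivAt (fun t : ℝ => (p.1, t, p.2.2)) (0, 1, 0) p.2.1 :=
    (hasDerivAt_const _ _).prodMk ((hasDerivAt_id _).prodMk (hasDerivAt_const _ _))
  exact (h1.comp_hasDerivAt p.2.1 h2).deriv

lemma contDiffOn_dD {G : ℝ → ℝ → ℝ → ℝ} {S : Set (ℝ × ℝ × ℝ)} (hS : IsOpen S) {n : ℕ}
    (hG : ContDiffOn ℝ (n + 1) (fun p : ℝ × ℝ × ℝ => G p.1 p.2.1 p.2.2) S) :
    ContDiffOn ℝ n (fun p : ℝ × ℝ × ℝ => dD G p.1 p.2.1 p.2.2) S := by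
  have h := (hG.fderiv_of_isOpen hS le_rfl).clm_apply
    (contDiffOn_const (c := ((0, 0, 1) : ℝ × ℝ × ℝ)))
  refine h.congr fun p hp => ?_
  have h1 : HasFDerivAt (fun p : ℝ × ℝ × ℝ => G p.1 p.2.1 p.2.2) _ (p.1, p.2.1, p.2.2) :=
    ((hG.differentiableOn (by norm_num)).differentiableAt (hS.mem_nhds hp)).hasFDerivAt
  have h2 : HasDerivAt (fun t : ℝ => (p.1, p.2.1, t)) (0, 0, 1) p.2.2 :=
    (hasDerivAt_const _ _).prodMk ((hasDerivAt_const _ _).prodMk (hasDerivAt_id _))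
  exact (h1.comp_hasDerivAt p.2.2 h2).deriv

lemma contDiff_slice_m {G : ℝ → ℝ → ℝ → ℝ} {J : Set ℝ} {n : ℕ}
    (hG : ContDiffOn ℝ n (fun p : ℝ × ℝ × ℝ => G p.1 p.2.1 p.2.2)
      (J ×ˢ (univ : Set ℝ) ×ˢ (univ : Set ℝ))) {q : ℝ} (hq : q ∈ J) (d : ℝ) :
    ContDiff ℝ n (fun m => G q m d) := by
  have := hG.comp_contDiff (f := fun m : ℝ => (q, m, d)) (by fun_prop) (fun m => by simp [hq])
  exact this

lemma contDiff_slice_d {G : ℝ → ℝ → ℝ → ℝ} {J : Set ℝ} {n : ℕ}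
    (hG : ContDiffOn ℝ n (fun p : ℝ × ℝ × ℝ => G p.1 p.2.1 p.2.2)
      (J ×ˢ (univ : Set ℝ) ×ˢ (univ : Set ℝ))) {q : ℝ} (hq : q ∈ J) (m : ℝ) :
    ContDiff ℝ n (fun d => G q m d) := by
  have := hG.comp_contDiff (f := fun d : ℝ => (q, m, d)) (by fun_prop) (fun m => by simp [hq])
  exact this

/-! ### Comparison of two points of the half-plane `d ≥ 0` -/

lemma exists_mem_uIcc_sub_eq {f : ℝ → ℝ} (hf : Differentiable ℝ f) (a b : ℝ) :
    ∃ c ∈ uIcc a b, f b - f a = deriv f c * (b - a) := by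
  wlog hab : a < b generalizing a b
  · rcases (not_lt.1 hab).eq_or_lt with rfl | h
    · exact ⟨b, by simp, by ring⟩
    · obtain ⟨c, hc, e⟩ := this b a h
      exact ⟨c, uIcc_comm b a ▸ hc, by linarith⟩
  obtain ⟨c, hc, h⟩ := exists_deriv_eq_slope f hab hf.continuous.continuousOn hf.differentiableOn
  have : b - a ≠ 0 := (sub_pos.2 hab).ne'
  exact ⟨c, Icc_subset_uIcc (Ioo_subset_Icc_self hc), by rw [h]; field_simp⟩

/-- The increment in `m` of `G(m, d) / d`, for `G` odd in `d`, is a mixed derivative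
`∂_m ∂_d G`. -/
lemma odd_dslope_sub_eq_mixed {G : ℝ → ℝ → ℝ} (hd : ∀ m, Differentiable ℝ (G m))
    (hodd : ∀ m d, G m (-d) = -G m d) (hm : ∀ d, Differentiable ℝ (fun m => deriv (G m) d))
    (m₁ m₂ : ℝ) {d : ℝ} (hd0 : 0 ≤ d) :
    ∃ x ∈ uIcc m₁ m₂, ∃ ξ ∈ Icc 0 d, dslope (G m₂) 0 d - dslope (G m₁) 0 d =
      deriv (fun m => deriv (G m) ξ) x * (m₂ - m₁) := by
  obtain ⟨ξ, hξ, h⟩ : ∃ ξ ∈ Icc 0 d,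
      dslope (G m₂) 0 d - dslope (G m₁) 0 d = deriv (G m₂) ξ - deriv (G m₁) ξ := by
    rcases hd0.eq_or_lt with rfl | hlt
    · exact ⟨0, by simp, by simp⟩
    have h0 : ∀ m, G m 0 = 0 := fun m => eq_zero_of_odd (hodd m)
    obtain ⟨ξ, hξ, h⟩ := exists_mem_Ioo_eq_mul_deriv (g := fun t => G m₂ t - G m₁ t)
      ((hd m₂).sub (hd m₁)) (by simp [h0]) hlt
    refine ⟨ξ, Ioo_subset_Icc_self hξ, ?_⟩
    rw [deriv_fun_sub (hd m₂ ξ) (hd m₁ ξ)] at h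
    rw [dslope_of_ne _ hlt.ne', dslope_of_ne _ hlt.ne', slope_def_field, slope_def_field, h0, h0,
      sub_zero, sub_zero, sub_zero, ← sub_div, h]
    field_simp
  obtain ⟨x, hx, hmv⟩ := exists_mem_uIcc_sub_eq (hm ξ) m₁ m₂
  exact ⟨x, hx, ξ, hξ, h.trans hmv⟩

/-- The difference formulas for `F⁺` and `F⁻ / d` between two points with `d ≥ 0`, in terms of the
increments of `m` and of `d²`. -/
lemma exists_coeffs {J : Set ℝ} (hJ : IsOpen J) {Fp Fm : ℝ → ℝ → ℝ → ℝ}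
    (hFp : ContDiffOn ℝ 3 (fun p : ℝ × ℝ × ℝ => Fp p.1 p.2.1 p.2.2)
      (J ×ˢ (univ : Set ℝ) ×ˢ (univ : Set ℝ)))
    (hFm : ContDiffOn ℝ 3 (fun p : ℝ × ℝ × ℝ => Fm p.1 p.2.1 p.2.2)
      (J ×ˢ (univ : Set ℝ) ×ˢ (univ : Set ℝ)))
    (heven : ∀ q ∈ J, ∀ m d : ℝ, Fp q m (-d) = Fp q m d)
    (hodd : ∀ q ∈ J, ∀ m d : ℝ, Fm q m (-d) = -Fm q m d)
    {q : ℝ} (hq : q ∈ J) (m₁ m₂ : ℝ) {d₁ d₂ : ℝ} (h₁ : 0 ≤ d₁) (h₁₂ : d₁ ≤ d₂) :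
    ∃ x ∈ uIcc m₁ m₂, ∃ y ∈ uIcc m₁ m₂, ∃ η ∈ Icc 0 d₂, ∃ ξ ∈ Icc 0 d₂, ∃ ζ ∈ Icc 0 d₂,
      Fp q m₂ d₂ - Fp q m₁ d₁ =
        dM Fp q x d₂ * (m₂ - m₁) + dD (dD Fp) q m₁ η / 2 * (d₂ ^ 2 - d₁ ^ 2) ∧
      dslope (Fm q m₂) 0 d₂ - dslope (Fm q m₁) 0 d₁ =
        dM (dD Fm) q y ξ * (m₂ - m₁) + dD (dD (dD Fm)) q m₁ ζ / 6 * (d₂ ^ 2 - d₁ ^ 2) := by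
  have hS : IsOpen (J ×ˢ (univ : Set ℝ) ×ˢ (univ : Set ℝ)) :=
    hJ.prod (isOpen_univ.prod isOpen_univ)
  have hFm1 := contDiffOn_dD (n := 2) hS hFm
  obtain ⟨x, hx, ex⟩ := exists_mem_uIcc_sub_eq
    ((contDiff_slice_m (n := 3) hFp hq d₂).differentiable (by norm_num)) m₁ m₂
  obtain ⟨η, hη, eη⟩ := even_sub_eq
    ((contDiff_slice_d (n := 3) hFp hq m₁).of_le (by norm_num)) (heven q hq m₁) h₁ h₁₂
  obtain ⟨y, hy, ξ, hξ, ey⟩ := odd_dslope_sub_eq_mixed (G := Fm q)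
    (fun m => (contDiff_slice_d (n := 3) hFm hq m).differentiable (by norm_num))
    (hodd q hq) (fun d => (contDiff_slice_m hFm1 hq d).differentiable (by norm_num)) m₁ m₂
    (h₁.trans h₁₂)
  obtain ⟨ζ, hζ, eζ⟩ := odd_dslope_sub_eq
    (contDiff_slice_d (n := 3) hFm hq m₁) (hodd q hq m₁) h₁ h₁₂
  refine ⟨x, hx, y, hy, η, hη, ξ, hξ, ζ, hζ, ?_, ?_⟩
  · have e : dM Fp q x d₂ = deriv (fun m => Fp q m d₂) x := rfl
    have e' : dD (dD Fp) q m₁ η = deriv (deriv (fun d => Fp q m₁ d)) η := rfl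
    rw [e, e']
    linarith
  · have e : dM (dD Fm) q y ξ = deriv (fun m => deriv (Fm q m) ξ) y := rfl
    have e' : dD (dD (dD Fm)) q m₁ ζ = deriv (deriv (deriv (fun d => Fm q m₁ d))) ζ := rfl
    rw [e, e']
    linarith

/-- The effective cubic coefficient `∂_d³ F⁻ / 6 - ∂_m ∂_d F⁻ · ∂_d² F⁺ / (2 ∂_m F⁺)`, with the four
derivatives evaluated at four independent points: `∂_m F⁺` at the first, `∂_d² F⁺` at the second,
`∂_m ∂_d F⁻` at the third and `∂_d³ F⁻` at the fourth. On the diagonal over `(q, m₀(q), 0)` it is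
`β_eff(q)`. -/
noncomputable def effCubic (Fp Fm : ℝ → ℝ → ℝ → ℝ)
    (x : (ℝ × ℝ × ℝ) × (ℝ × ℝ × ℝ) × (ℝ × ℝ × ℝ) × (ℝ × ℝ × ℝ)) :
    ℝ :=
  dD (dD (dD Fm)) x.2.2.2.1 x.2.2.2.2.1 x.2.2.2.2.2 / 6 -
    dM (dD Fm) x.2.2.1.1 x.2.2.1.2.1 x.2.2.1.2.2 *
      (dD (dD Fp) x.2.1.1 x.2.1.2.1 x.2.1.2.2 / (2 * dM Fp x.1.1 x.1.2.1 x.1.2.2))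

/-- Continuity of the coefficients at the bifurcation point, with the bound `K` chosen before
`ε`. -/
lemma effCubic_near {J : Set ℝ} (hJ : IsOpen J) {Fp Fm : ℝ → ℝ → ℝ → ℝ}
    (hFp : ContDiffOn ℝ 3 (fun p : ℝ × ℝ × ℝ => Fp p.1 p.2.1 p.2.2)
      (J ×ˢ (univ : Set ℝ) ×ˢ (univ : Set ℝ)))
    (hFm : ContDiffOn ℝ 3 (fun p : ℝ × ℝ × ℝ => Fm p.1 p.2.1 p.2.2)
      (J ×ˢ (univ : Set ℝ) ×ˢ (univ : Set ℝ)))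
    {P : ℝ × ℝ × ℝ} (hP : P.1 ∈ J) (hα : dM Fp P.1 P.2.1 P.2.2 ≠ 0) :
    ∃ K ≥ 0, ∀ ε > 0, ∃ r > 0, ∀ P₁ ∈ Metric.ball P r, ∀ P₂ ∈ Metric.ball P r,
      ∀ P₃ ∈ Metric.ball P r, ∀ P₄ ∈ Metric.ball P r,
      P₁.1 ∈ J ∧ dM Fp P₁.1 P₁.2.1 P₁.2.2 ≠ 0 ∧
      |dD (dD Fp) P₂.1 P₂.2.1 P₂.2.2 / (2 * dM Fp P₁.1 P₁.2.1 P₁.2.2)| ≤ K ∧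
      |effCubic Fp Fm (P₁, P₂, P₃, P₄) - effCubic Fp Fm (P, P, P, P)| < ε := by
  have hS : IsOpen (J ×ˢ (univ : Set ℝ) ×ˢ (univ : Set ℝ)) :=
    hJ.prod (isOpen_univ.prod isOpen_univ)
  have hPS : (J ×ˢ (univ : Set ℝ) ×ˢ (univ : Set ℝ)) ∈ nhds P := hS.mem_nhds (by simp [hP])
  have ca := (contDiffOn_dM (n := 2) hS hFp).continuousOn.continuousAt hPS
  have hb1 := contDiffOn_dD (n := 2) hS hFp
  have cb := (contDiffOn_dD (n := 1) hS hb1).continuousOn.continuousAt hPS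
  have hc1 := contDiffOn_dD (n := 2) hS hFm
  have cc := (contDiffOn_dM (n := 1) hS hc1).continuousOn.continuousAt hPS
  have he2 := contDiffOn_dD (n := 1) hS hc1
  have ce := (contDiffOn_dD (n := 0) hS (by simpa using he2)).continuousOn.continuousAt hPS
  set X : (ℝ × ℝ × ℝ) × (ℝ × ℝ × ℝ) × (ℝ × ℝ × ℝ) × (ℝ × ℝ × ℝ) := (P, P, P, P) with hX
  have ca' := ca.comp_of_eq
    (f := fun x : (ℝ × ℝ × ℝ) × (ℝ × ℝ × ℝ) × (ℝ × ℝ × ℝ) × (ℝ × ℝ × ℝ) => x.1)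
    (x := X) (by fun_prop) rfl
  have cb' := cb.comp_of_eq
    (f := fun x : (ℝ × ℝ × ℝ) × (ℝ × ℝ × ℝ) × (ℝ × ℝ × ℝ) × (ℝ × ℝ × ℝ) => x.2.1)
    (x := X) (by fun_prop) rfl
  have cc' := cc.comp_of_eq
    (f := fun x : (ℝ × ℝ × ℝ) × (ℝ × ℝ × ℝ) × (ℝ × ℝ × ℝ) × (ℝ × ℝ × ℝ) => x.2.2.1)
    (x := X) (by fun_prop) rfl
  have ce' := ce.comp_of_eq
    (f := fun x : (ℝ × ℝ × ℝ) × (ℝ × ℝ × ℝ) × (ℝ × ℝ × ℝ) × (ℝ × ℝ × ℝ) => x.2.2.2)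
    (x := X) (by fun_prop) rfl
  have cg := cb'.div (ca'.const_mul 2) (by simpa [hX] using hα)
  have cD : ContinuousAt (effCubic Fp Fm) X := (ce'.div_const 6).sub (cc'.mul cg)
  refine ⟨|dD (dD Fp) P.1 P.2.1 P.2.2 / (2 * dM Fp P.1 P.2.1 P.2.2)| + 1, by positivity, ?_⟩
  intro ε hε
  have e1 : ∀ᶠ x in nhds X, x.1 ∈ J ×ˢ (univ : Set ℝ) ×ˢ (univ : Set ℝ) :=
    (continuous_fst.tendsto X).eventually hPS
  have e2 := ca'.eventually_ne hα
  have e3 := cg.abs.eventually_lt_const (lt_add_one _)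
  have e4 := Metric.tendsto_nhds.1 cD ε hε
  obtain ⟨r, hr, h⟩ := Metric.eventually_nhds_iff_ball.1 (e1.and (e2.and (e3.and e4)))
  refine ⟨r, hr, fun P₁ h₁ P₂ h₂ P₃ h₃ P₄ h₄ => ?_⟩
  obtain ⟨g1, g2, g3, g4⟩ := h (P₁, P₂, P₃, P₄) (by
    simp only [hX, Metric.mem_ball, Prod.dist_eq, max_lt_iff] at h₁ h₂ h₃ h₄ ⊢
    exact ⟨h₁, h₂, h₃, h₄⟩)
  exact ⟨g1.1, g2, g3.le, g4⟩

/-- Between two zeros of `F⁺` with `d ≥ 0` near the bifurcation point, `F⁻ / d` changes by `D · Δ(d²)`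
with `D` close to the effective cubic coefficient, and `m` changes by `O(Δ(d²))`. -/
lemma comparison {J : Set ℝ} (hJ : IsOpen J) {Fp Fm : ℝ → ℝ → ℝ → ℝ}
    (hFp : ContDiffOn ℝ 3 (fun p : ℝ × ℝ × ℝ => Fp p.1 p.2.1 p.2.2)
      (J ×ˢ (univ : Set ℝ) ×ˢ (univ : Set ℝ)))
    (hFm : ContDiffOn ℝ 3 (fun p : ℝ × ℝ × ℝ => Fm p.1 p.2.1 p.2.2)
      (J ×ˢ (univ : Set ℝ) ×ˢ (univ : Set ℝ)))
    (heven : ∀ q ∈ J, ∀ m d : ℝ, Fp q m (-d) = Fp q m d)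
    (hodd : ∀ q ∈ J, ∀ m d : ℝ, Fm q m (-d) = -Fm q m d)
    {qc mc β : ℝ} (hq : qc ∈ J) (hα : dM Fp qc mc 0 ≠ 0)
    (hβ : effCubic Fp Fm ((qc, mc, 0), (qc, mc, 0), (qc, mc, 0), (qc, mc, 0)) = β) :
    ∃ K ≥ 0, ∀ ε > 0, ∃ r > 0,
      (∀ q m₁ m₂ d₁ d₂ : ℝ, |q - qc| < r → |m₁ - mc| < r → |m₂ - mc| < r →
        0 ≤ d₁ → d₁ ≤ d₂ → d₂ < r → Fp q m₁ d₁ = 0 → Fp q m₂ d₂ = 0 →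
        ∃ D, |D - β| < ε ∧
          dslope (Fm q m₂) 0 d₂ - dslope (Fm q m₁) 0 d₁ = D * (d₂ ^ 2 - d₁ ^ 2) ∧
          |m₂ - m₁| ≤ K * (d₂ ^ 2 - d₁ ^ 2)) ∧
      (∀ q m : ℝ, |q - qc| < r → |m - mc| < r →
        |effCubic Fp Fm ((q, m, 0), (q, m, 0), (q, m, 0), (q, m, 0)) - β| < ε) := by
  obtain ⟨K, hK, h⟩ := effCubic_near hJ hFp hFm (P := (qc, mc, 0)) hq hα
  refine ⟨K, hK, fun ε hε => ?_⟩
  obtain ⟨r, hr, h⟩ := h ε hε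
  rw [hβ] at h
  have hball : ∀ {q m d : ℝ}, |q - qc| < r → |m - mc| < r → |d| < r →
      (q, m, d) ∈ Metric.ball ((qc, mc, 0) : ℝ × ℝ × ℝ) r := by
    intro q m d h1 h2 h3
    simp only [Metric.mem_ball, Prod.dist_eq, max_lt_iff, Real.dist_eq, sub_zero]
    exact ⟨h1, h2, h3⟩
  refine ⟨r, hr, ?_, fun q m h1 h2 => ?_⟩
  · intro q m₁ m₂ d₁ d₂ hqr hm₁ hm₂ h₁ h₁₂ h₂ z₁ z₂
    have hbetween : ∀ {x}, x ∈ uIcc m₁ m₂ → |x - mc| < r := by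
      intro x hx
      have hcv := (convex_ball mc r).ordConnected
      have := hcv.uIcc_subset (x := m₁) (y := m₂) (by simpa [Real.dist_eq] using hm₁)
        (by simpa [Real.dist_eq] using hm₂) hx
      simpa [Real.dist_eq] using this
    have hd : ∀ {t}, t ∈ Icc 0 d₂ → |t| < r := fun {t} ht => by
      rw [abs_of_nonneg ht.1]; exact ht.2.trans_lt h₂
    have hqJ : q ∈ J := by
      have hb := hball hqr hm₁ (hd ⟨h₁, h₁₂⟩)
      exact (h _ hb _ hb _ hb _ hb).1
    obtain ⟨x, hx, y, hy, η, hη, ξ, hξ, ζ, hζ, eA, eH⟩ :=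
      exists_coeffs hJ hFp hFm heven hodd hqJ m₁ m₂ h₁ h₁₂
    obtain ⟨-, ha, hK', hD⟩ := h _ (hball hqr (hbetween hx) (hd ⟨h₁.trans h₁₂, le_rfl⟩))
      _ (hball hqr hm₁ (hd hη)) _ (hball hqr (hbetween hy) (hd hξ)) _ (hball hqr hm₁ (hd hζ))
    rw [z₁, z₂, sub_zero] at eA
    -- both points are zeros of `F⁺`, so its difference formula can be solved for `m₂ - m₁`
    have hΔ : m₂ - m₁ = -(dD (dD Fp) q m₁ η / (2 * dM Fp q x d₂)) * (d₂ ^ 2 - d₁ ^ 2) := by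
      field_simp
      linarith
    refine ⟨_, hD, ?_, ?_⟩
    · rw [eH, hΔ]
      simp only [effCubic]
      ring
    · have hs : 0 ≤ d₂ ^ 2 - d₁ ^ 2 := by nlinarith
      rw [hΔ, abs_mul, abs_neg, abs_of_nonneg hs]
      exact mul_le_mul_of_nonneg_right hK' hs
  · have hb := hball h1 h2 (d := 0) (by simpa using hr)
    exact (h _ hb _ hb _ hb _ hb).2.2.2

/-- By the implicit function theorem, `F⁺(q, ·, d)` has a zero near `mc` for all `(q, d)` near
`(qc, 0)`. -/
lemma exists_zero_near {J : Set ℝ} (hJ : IsOpen J) {Fp : ℝ → ℝ → ℝ → ℝ}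
    (hFp : ContDiffOn ℝ 3 (fun p : ℝ × ℝ × ℝ => Fp p.1 p.2.1 p.2.2)
      (J ×ˢ (univ : Set ℝ) ×ˢ (univ : Set ℝ)))
    {qc mc : ℝ} (hq : qc ∈ J) (hα : dM Fp qc mc 0 ≠ 0) (h0 : Fp qc mc 0 = 0)
    {r : ℝ} (hr : 0 < r) :
    ∃ s > 0, ∀ q d : ℝ, |q - qc| < s → |d| < s → ∃ m, |m - mc| < r ∧ Fp q m d = 0 := by
  have hS : IsOpen (J ×ˢ (univ : Set ℝ) ×ˢ (univ : Set ℝ)) :=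
    hJ.prod (isOpen_univ.prod isOpen_univ)
  have h1 : ContDiffAt ℝ 3 (fun p : ℝ × ℝ × ℝ => Fp p.1 p.2.1 p.2.2) (qc, mc, 0) :=
    hFp.contDiffAt (hS.mem_nhds (by simp [hq]))
  have h2 : ContDiffAt ℝ 3 (fun p : (ℝ × ℝ) × ℝ => Fp p.1.1 p.2 p.1.2) ((qc, 0), mc) :=
    h1.comp ((qc, 0), mc) (f := fun p : (ℝ × ℝ) × ℝ => (p.1.1, p.2, p.1.2)) (by fun_prop)
  have h3 := h2.hasStrictFDerivAt (by norm_num)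
  set L := fderiv ℝ (fun p : (ℝ × ℝ) × ℝ => Fp p.1.1 p.2 p.1.2) ((qc, 0), mc)
  have hL : (L ∘L .inr ℝ (ℝ × ℝ) ℝ) 1 = dM Fp qc mc 0 := by
    have h5 : HasDerivAt (fun t : ℝ => (((qc, 0), t) : (ℝ × ℝ) × ℝ)) (0, 1) mc :=
      (hasDerivAt_const _ _).prodMk (hasDerivAt_id _)
    exact (h3.hasFDerivAt.comp_hasDerivAt mc h5).deriv.symm
  have hinv : (L ∘L .inr ℝ (ℝ × ℝ) ℝ).IsInvertible := by
    refine ⟨ContinuousLinearEquiv.unitsEquivAut ℝ (Units.mk0 _ hα), ?_⟩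
    ext
    rw [hL]
    simp
  have e1 := h3.eventually_apply_implicitFunctionOfProdDomain hinv
  have e2 := Metric.tendsto_nhds.1 (h3.tendsto_implicitFunctionOfProdDomain hinv) r hr
  obtain ⟨s, hs, h⟩ := Metric.eventually_nhds_iff_ball.1 (e1.and e2)
  refine ⟨s, hs, fun q d h1 h2 => ?_⟩
  obtain ⟨g1, g2⟩ := h (q, d) (by
    simp only [Metric.mem_ball, Prod.dist_eq, max_lt_iff, Real.dist_eq, sub_zero]
    exact ⟨h1, h2⟩)
  exact ⟨_, g2, g1.trans h0⟩

/-! ### The bifurcation -/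

/-- The pitchfork for an abstract system `Z q m d`, `H q m d = 0` on `d ≥ 0` satisfying the
comparison property; `Z` stands for `F⁺ = 0` and `H` for `F⁻ / d`. The parametrized nontrivial zero
is `(mp q, dp q)`, and its amplitude satisfies `-μ q = D * dp q ^ 2` with `D` arbitrarily close
to `β`. -/
lemma pitchfork_core {qc mc β K : ℝ} {Z : ℝ → ℝ → ℝ → Prop} {H : ℝ → ℝ → ℝ → ℝ} {m₀ μ : ℝ → ℝ}
    (hβ : β < 0) (hK : 0 ≤ K)
    (hcomp : ∀ ε > 0, ∃ r > 0, ∀ q m₁ m₂ d₁ d₂ : ℝ,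
      |q - qc| < r → |m₁ - mc| < r → |m₂ - mc| < r → 0 ≤ d₁ → d₁ ≤ d₂ → d₂ < r →
      Z q m₁ d₁ → Z q m₂ d₂ →
      ∃ D, |D - β| < ε ∧ H q m₂ d₂ - H q m₁ d₁ = D * (d₂ ^ 2 - d₁ ^ 2) ∧
        |m₂ - m₁| ≤ K * (d₂ ^ 2 - d₁ ^ 2))
    (hex : ∀ r > 0, ∃ s > 0, ∀ q d : ℝ, |q - qc| < s → |d| < s → ∃ m, |m - mc| < r ∧ Z q m d)
    (hm₀ : Tendsto m₀ (nhds qc) (nhds mc)) (hZ : ∀ᶠ q in nhds qc, Z q (m₀ q) 0)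
    (hμ : Tendsto μ (nhds qc) (nhds 0)) (hH : ∀ q, H q (m₀ q) 0 = μ q) :
    ∃ r > 0, ∃ mp dp : ℝ → ℝ,
      (∀ᶠ q in nhds qc, |m₀ q - mc| < r ∧ (∀ m, |m - mc| < r → Z q m 0 → m = m₀ q) ∧
        (∀ m d, |m - mc| < r → 0 < d → d < r → Z q m d → H q m d = 0 →
          0 < μ q ∧ m = mp q ∧ d = dp q) ∧
        (0 < μ q → 0 < dp q ∧ dp q < r ∧ |mp q - mc| < r ∧ Z q (mp q) (dp q) ∧
          H q (mp q) (dp q) = 0)) ∧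
      (∀ ε > 0, ∀ᶠ q in nhds qc, 0 < μ q → ∃ D, |D - β| < ε ∧ -μ q = D * dp q ^ 2) ∧
      (∀ᶠ q in nhds qc, 0 < μ q → |mp q - m₀ q| ≤ K * dp q ^ 2) := by
  obtain ⟨r, hr, hc⟩ := hcomp (-β / 2) (by linarith)
  obtain ⟨s, hs, hex⟩ := hex r hr
  have hnear : ∀ t > 0, ∀ᶠ q in nhds qc, |q - qc| < t := fun t ht =>
    Metric.ball_mem_nhds qc ht
  have hm₀near : ∀ t > 0, ∀ᶠ q in nhds qc, |m₀ q - mc| < t := fun t ht =>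
    Metric.tendsto_nhds.1 hm₀ t ht
  set δ := min (s / 2) (r / 2) with hδ
  have hδ0 : 0 < δ := by positivity
  have hδs : δ < s := (min_le_left _ _).trans_lt (by linarith)
  have hδr : δ < r := (min_le_right _ _).trans_lt (by linarith)
  have hβδ : 0 < -β / 2 * δ ^ 2 := by have : 0 < -β := by linarith
                                      positivity
  -- The intermediate value theorem for `H` along zeros `M d` of `Z q · d`, `0 ≤ d ≤ δ`. The `M d` are
  -- chosen arbitrarily: the comparison property already makes `d ↦ H q (M d) d` continuous.
  have hexist : ∀ q, |q - qc| < r → |q - qc| < s → |m₀ q - mc| < r → Z q (m₀ q) 0 →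
      μ q < -β / 2 * δ ^ 2 → 0 < μ q →
      ∃ m d, 0 < d ∧ d < r ∧ |m - mc| < r ∧ Z q m d ∧ H q m d = 0 := by
    intro q hqr hqs hmr hZq hμδ hμ0
    have : ∀ d : ℝ, ∃ m, d ∈ Icc 0 δ → |m - mc| < r ∧ Z q m d := fun d => by
      by_cases hd : d ∈ Icc 0 δ
      · obtain ⟨m, hm⟩ := hex q d hqs (by rw [abs_of_nonneg hd.1]; exact hd.2.trans_lt hδs)
        exact ⟨m, fun _ => hm⟩
      · exact ⟨0, fun h => absurd h hd⟩
    choose M hM using this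
    have hdiff : ∀ d₁ d₂, 0 ≤ d₁ → d₁ ≤ d₂ → d₂ ≤ δ → ∃ D, |D - β| < -β / 2 ∧
        H q (M d₂) d₂ - H q (M d₁) d₁ = D * (d₂ ^ 2 - d₁ ^ 2) := by
      intro d₁ d₂ h1 h12 h2
      obtain ⟨g1, g2⟩ := hM d₁ ⟨h1, h12.trans h2⟩
      obtain ⟨g3, g4⟩ := hM d₂ ⟨h1.trans h12, h2⟩
      obtain ⟨D, k1, k2, -⟩ := hc q _ _ d₁ d₂ hqr g1 g3 h1 h12 (h2.trans_lt hδr) g2 g4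
      exact ⟨D, k1, k2⟩
    have hlip : ContinuousOn (fun d => H q (M d) d) (Icc 0 δ) := by
      have key : ∀ d₁ d₂, 0 ≤ d₁ → d₁ ≤ d₂ → d₂ ≤ δ →
          |H q (M d₂) d₂ - H q (M d₁) d₁| ≤ (-β * 3 * δ) * |d₂ - d₁| := by
        intro d₁ d₂ h1 h12 h2
        obtain ⟨D, k1, k2⟩ := hdiff d₁ d₂ h1 h12 h2
        have hD : |D| ≤ -β * 3 / 2 := by
          rw [abs_lt] at k1
          rw [abs_le]
          constructor <;> linarith
        have : d₂ ^ 2 - d₁ ^ 2 = (d₂ + d₁) * (d₂ - d₁) := by ring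
        rw [k2, this, abs_mul, abs_mul, ← mul_assoc]
        refine mul_le_mul_of_nonneg_right ?_ (abs_nonneg _)
        calc |D| * |d₂ + d₁| ≤ (-β * 3 / 2) * (2 * δ) := by
              refine mul_le_mul hD ?_ (abs_nonneg _) (by linarith)
              rw [abs_of_nonneg (by linarith)]
              linarith
          _ = -β * 3 * δ := by ring
      have hC : 0 ≤ -β * 3 * δ := by have : 0 < -β := by linarith
                                     positivity
      refine (LipschitzOnWith.of_dist_le_mul (K := ⟨-β * 3 * δ, hC⟩) ?_).continuousOn
      intro x hx y hy
      rw [Real.dist_eq, Real.dist_eq]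
      rcases le_total x y with hxy | hxy
      · rw [abs_sub_comm, abs_sub_comm x y]
        exact key x y hx.1 hxy hy.2
      · exact key y x hy.1 hxy hx.2
    have hM0 : M 0 = m₀ q := by
      obtain ⟨g1, g2⟩ := hM 0 ⟨le_rfl, hδ0.le⟩
      obtain ⟨-, -, -, k⟩ := hc q _ _ 0 0 hqr hmr g1 le_rfl le_rfl hr hZq g2
      have : |M 0 - m₀ q| ≤ 0 := by simpa using k
      exact sub_eq_zero.1 (abs_nonpos_iff.1 this)
    have hend : H q (M δ) δ < 0 := by
      obtain ⟨D, k1, k2⟩ := hdiff 0 δ le_rfl hδ0.le le_rfl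
      rw [hM0, hH] at k2
      rw [abs_lt] at k1
      have : D * δ ^ 2 ≤ β / 2 * δ ^ 2 :=
        mul_le_mul_of_nonneg_right (by linarith) (by positivity)
      linarith
    have hstart : H q (M 0) 0 = μ q := by rw [hM0, hH]
    obtain ⟨d, hd, hd0⟩ := intermediate_value_Icc' hδ0.le hlip
      (show (0 : ℝ) ∈ Icc (H q (M δ) δ) (H q (M 0) 0) from ⟨hend.le, hstart ▸ hμ0.le⟩)
    obtain ⟨g1, g2⟩ := hM d hd
    refine ⟨M d, d, hd.1.lt_of_ne ?_, hd.2.trans_lt hδr, g1, g2, hd0⟩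
    rintro rfl
    exact hμ0.ne' (hstart.symm.trans hd0)
  have huniq : ∀ q m₁ m₂ d₁ d₂, |q - qc| < r → |m₁ - mc| < r → |m₂ - mc| < r →
      0 ≤ d₁ → d₁ ≤ d₂ → d₂ < r → Z q m₁ d₁ → Z q m₂ d₂ → H q m₁ d₁ = H q m₂ d₂ →
      m₁ = m₂ ∧ d₁ = d₂ := by
    intro q m₁ m₂ d₁ d₂ hq h1 h2 hd1 hd hd2 z1 z2 hHH
    obtain ⟨D, k1, k2, k3⟩ := hc q m₁ m₂ d₁ d₂ hq h1 h2 hd1 hd hd2 z1 z2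
    rw [hHH, sub_self] at k2
    rw [abs_lt] at k1
    have hsq : d₂ ^ 2 - d₁ ^ 2 = 0 := (mul_eq_zero.1 k2.symm).resolve_left (by linarith)
    rw [hsq, mul_zero] at k3
    refine ⟨(sub_eq_zero.1 (abs_nonpos_iff.1 k3)).symm, ?_⟩
    exact (pow_left_inj₀ hd1 (hd1.trans hd) two_ne_zero).1 (by linarith)
  have : ∀ q, ∃ m d, (|q - qc| < r ∧ |q - qc| < s ∧ |m₀ q - mc| < r ∧ Z q (m₀ q) 0 ∧
      μ q < -β / 2 * δ ^ 2) → 0 < μ q →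
      0 < d ∧ d < r ∧ |m - mc| < r ∧ Z q m d ∧ H q m d = 0 := by
    intro q
    by_cases h : (|q - qc| < r ∧ |q - qc| < s ∧ |m₀ q - mc| < r ∧ Z q (m₀ q) 0 ∧
      μ q < -β / 2 * δ ^ 2) ∧ 0 < μ q
    · obtain ⟨⟨a1, a2, a3, a4, a5⟩, a6⟩ := h
      obtain ⟨m, d, hmd⟩ := hexist q a1 a2 a3 a4 a5 a6
      exact ⟨m, d, fun _ _ => hmd⟩
    · exact ⟨0, 0, fun h1 h2 => absurd ⟨h1, h2⟩ h⟩
  choose mp dp hpd using this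
  have hgood : ∀ᶠ q in nhds qc, |q - qc| < r ∧ |q - qc| < s ∧ |m₀ q - mc| < r ∧ Z q (m₀ q) 0 ∧
      μ q < -β / 2 * δ ^ 2 := by
    filter_upwards [hnear r hr, hnear s hs, hm₀near r hr, hZ, hμ.eventually_lt_const hβδ]
      with q h1 h2 h3 h4 h5 using ⟨h1, h2, h3, h4, h5⟩
  have hest : ∀ᶠ q in nhds qc, 0 < μ q → 0 < dp q ∧ |mp q - mc| < r ∧ dp q < r ∧
      Z q (mp q) (dp q) ∧ H q (mp q) (dp q) = 0 ∧ dp q ^ 2 ≤ 2 / -β * μ q ∧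
      |mp q - m₀ q| ≤ K * dp q ^ 2 := by
    filter_upwards [hgood] with q hq hμ0
    obtain ⟨p1, p2, p3, p4, p5⟩ := hpd q hq hμ0
    obtain ⟨D, k1, k2, k3⟩ := hc q _ _ 0 (dp q) hq.1 hq.2.2.1 p3 le_rfl p1.le p2 hq.2.2.2.1 p4
    refine ⟨p1, p3, p2, p4, p5, ?_, by simpa using k3⟩
    rw [p5, hH] at k2
    rw [abs_lt] at k1
    have : D * dp q ^ 2 ≤ β / 2 * dp q ^ 2 :=
      mul_le_mul_of_nonneg_right (by linarith) (by positivity)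
    have hβ' : 0 < -β := by linarith
    rw [div_mul_eq_mul_div, le_div_iff₀ hβ']
    linarith
  refine ⟨r, hr, mp, dp, ?_, ?_, ?_⟩
  · filter_upwards [hgood] with q hq
    refine ⟨hq.2.2.1, fun m hm hz => ?_, fun m d hm hd0 hdr hz hH0 => ?_, fun hμ0 => ?_⟩
    · obtain ⟨-, -, -, k⟩ := hc q _ _ 0 0 hq.1 hq.2.2.1 hm le_rfl le_rfl hr hq.2.2.2.1 hz
      have : |m - m₀ q| ≤ 0 := by simpa using k
      exact sub_eq_zero.1 (abs_nonpos_iff.1 this)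
    · have hμ0 : 0 < μ q := by
        obtain ⟨D, k1, k2, -⟩ := hc q _ _ 0 d hq.1 hq.2.2.1 hm le_rfl hd0.le hdr hq.2.2.2.1 hz
        rw [hH0, hH] at k2
        rw [abs_lt] at k1
        have : 0 < -D * d ^ 2 := mul_pos (by linarith) (by positivity)
        linarith
      obtain ⟨p1, p2, p3, p4, p5⟩ := hpd q hq hμ0
      refine ⟨hμ0, ?_⟩
      rcases le_total d (dp q) with h | h
      · exact huniq q _ _ _ _ hq.1 hm p3 hd0.le h p2 hz p4 (hH0.trans p5.symm)
      · obtain ⟨u1, u2⟩ := huniq q _ _ _ _ hq.1 p3 hm p1.le h hdr p4 hz (p5.trans hH0.symm)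
        exact ⟨u1.symm, u2.symm⟩
    · exact hpd q hq hμ0
  · intro ε hε
    -- `hest` forces `(mp q, dp q)` into the smaller ball on which `D` is within `ε` of `β`
    obtain ⟨r', hr', hc'⟩ := hcomp ε hε
    have t1 : Tendsto (fun q => K * (2 / -β * μ q) + |m₀ q - mc|) (nhds qc) (nhds 0) := by
      have := ((hμ.const_mul (2 / -β)).const_mul K).add ((hm₀.sub_const mc).abs)
      simpa using this
    have t2 : Tendsto (fun q => 2 / -β * μ q) (nhds qc) (nhds 0) := by
      simpa using hμ.const_mul (2 / -β)
    filter_upwards [hest, hZ, hnear r' hr', hm₀near r' hr', t1.eventually_lt_const hr',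
      t2.eventually_lt_const (show 0 < r' ^ 2 by positivity)] with q h1 h2 h3 h4 h5 h6 hμ0
    obtain ⟨p1, p2, p3, p4, p5, p6, p7⟩ := h1 hμ0
    have hmp : |mp q - mc| < r' := by
      have e1 : |mp q - mc| ≤ |mp q - m₀ q| + |m₀ q - mc| := abs_sub_le _ _ _
      have e2 := mul_le_mul_of_nonneg_left p6 hK
      linarith
    have hdp : dp q < r' := lt_of_pow_lt_pow_left₀ 2 hr'.le (by linarith)
    obtain ⟨D, k1, k2, -⟩ := hc' q _ _ 0 (dp q) h3 h4 hmp le_rfl p1.le hdp h2 p4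
    refine ⟨D, k1, ?_⟩
    rw [p5, hH] at k2
    linarith
  · filter_upwards [hest] with q h1 hμ0 using (h1 hμ0).2.2.2.2.2.2

/-- Since `dp q = √(-μ q / D)` with `D` and `βeff q` both close to `β`, continuity of `√(-1 / x)` at
`β` makes `dp q - √(-μ q / βeff q)` small relative to `√(μ q)`. -/
lemma amplitude_asymptotics {qc β : ℝ} (hβ : β < 0) {μ βeff dp : ℝ → ℝ}
    (hβeff : Tendsto βeff (nhds qc) (nhds β)) (hdp : ∀ᶠ q in nhds qc, 0 < μ q → 0 < dp q)
    (hD : ∀ ε > 0, ∀ᶠ q in nhds qc, 0 < μ q → ∃ D, |D - β| < ε ∧ -μ q = D * dp q ^ 2)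
    {c : ℝ} (hc : 0 < c) :
    ∀ᶠ q in nhds qc, 0 < μ q →
      |dp q - Real.sqrt (-(μ q) / βeff q)| ≤ c * Real.sqrt (μ q) := by
  have hcont : ContinuousAt (fun x : ℝ => Real.sqrt (-1 / x)) β :=
    (continuousAt_const.div continuousAt_id hβ.ne).sqrt
  obtain ⟨ε, hε, h⟩ := Metric.eventually_nhds_iff.1
    ((Metric.tendsto_nhds.1 hcont (c / 2) (by positivity)).and (eventually_lt_nhds hβ))
  filter_upwards [hdp, hD ε hε, Metric.tendsto_nhds.1 hβeff ε hε] with q h1 h2 h3 hμ0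
  obtain ⟨D, hDε, e⟩ := h2 hμ0
  obtain ⟨a1, a2⟩ := h (y := D) hDε
  obtain ⟨b1, b2⟩ := h h3
  have hsplit : ∀ x : ℝ, Real.sqrt (-(μ q) / x) = Real.sqrt (μ q) * Real.sqrt (-1 / x) := by
    intro x
    rw [← Real.sqrt_mul hμ0.le]
    congr 1
    ring
  have hdpq : dp q = Real.sqrt (-(μ q) / D) := by
    rw [e, mul_div_cancel_left₀ _ a2.ne, Real.sqrt_sq (h1 hμ0).le]
  rw [hdpq, hsplit, hsplit, ← mul_sub, abs_mul, abs_of_nonneg (Real.sqrt_nonneg _), mul_comm]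
  refine mul_le_mul_of_nonneg_right ?_ (Real.sqrt_nonneg _)
  rw [Real.dist_eq, abs_lt] at a1 b1
  rw [abs_le]
  constructor <;> linarith

/-- Local pitchfork bifurcation for the FOC vector field in center–distance
coordinates: `Fp` is even in `d`, `Fm` is odd in `d`, and they vanish along a
C³ center branch `m₀`. -/
theorem stmt14
    (J : Set ℝ) (hJopen : IsOpen J) (hJconn : J.OrdConnected)
    (qc : ℝ) (hqc : qc ∈ J)
    (Fp Fm : ℝ → ℝ → ℝ → ℝ)
    (hFpC3 : ContDiffOn ℝ 3 (fun p : ℝ × ℝ × ℝ => Fp p.1 p.2.1 p.2.2)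
      (J ×ˢ (univ : Set ℝ) ×ˢ (univ : Set ℝ)))
    (hFmC3 : ContDiffOn ℝ 3 (fun p : ℝ × ℝ × ℝ => Fm p.1 p.2.1 p.2.2)
      (J ×ˢ (univ : Set ℝ) ×ˢ (univ : Set ℝ)))
    (hFpeven : ∀ q ∈ J, ∀ m d : ℝ, Fp q m (-d) = Fp q m d)
    (hFmodd : ∀ q ∈ J, ∀ m d : ℝ, Fm q m (-d) = -Fm q m d)
    (m₀ : ℝ → ℝ) (hm₀C3 : ContDiffOn ℝ 3 m₀ J)
    (hm₀ : ∀ q ∈ J, Fp q (m₀ q) 0 = 0)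
    (α μ βeff : ℝ → ℝ)
    (hα : ∀ q, α q = deriv (fun m => Fp q m 0) (m₀ q))
    (hμ : ∀ q, μ q = deriv (fun d => Fm q (m₀ q) d) 0)
    (hβeff : ∀ q, βeff q = (1/6) * iteratedDeriv 3 (fun d => Fm q (m₀ q) d) 0 -
      deriv (fun m => deriv (fun d => Fm q m d) 0) (m₀ q) *
        iteratedDeriv 2 (fun d => Fp q (m₀ q) d) 0 / (2 * α q))
    (hαc : α qc ≠ 0) (hμc : μ qc = 0) (hμ'c : deriv μ qc ≠ 0)
    (hβc : βeff qc < 0) :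
    ∃ I : Set ℝ, IsOpen I ∧ qc ∈ I ∧ I ⊆ J ∧
    ∃ U ∈ nhds ((m₀ qc, (0:ℝ)) : ℝ × ℝ),
    ∃ mp mm dp dm : ℝ → ℝ,
      (∀ q ∈ I,
        (μ q < 0 → ∀ p ∈ U, (Fp q p.1 p.2 = 0 ∧ Fm q p.1 p.2 = 0) →
          p = (m₀ q, 0)) ∧
        (0 < μ q →
          0 < dp q ∧ dm q < 0 ∧
          {p : ℝ × ℝ | p ∈ U ∧ Fp q p.1 p.2 = 0 ∧ Fm q p.1 p.2 = 0} =
            {(m₀ q, 0), (mp q, dp q), (mm q, dm q)})) ∧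
      (fun q => dp q - Real.sqrt (-(μ q) / βeff q))
        =o[nhdsWithin qc {q | q ∈ I ∧ 0 < μ q}] (fun q => Real.sqrt (μ q)) ∧
      (fun q => dm q + Real.sqrt (-(μ q) / βeff q))
        =o[nhdsWithin qc {q | q ∈ I ∧ 0 < μ q}] (fun q => Real.sqrt (μ q)) ∧
      (fun q => mp q - m₀ q) =O[nhdsWithin qc {q | q ∈ I ∧ 0 < μ q}] μ ∧
      (fun q => mm q - m₀ q) =O[nhdsWithin qc {q | q ∈ I ∧ 0 < μ q}] μ := by
  -- `deriv μ qc ≠ 0` rules out the junk value, so `μ` is differentiable at `qc`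
  have hdiff : ContinuousAt μ qc := (differentiableAt_of_deriv_ne_zero hμ'c).continuousAt
  have hμt : Tendsto μ (nhds qc) (nhds 0) := by simpa [ContinuousAt, hμc] using hdiff
  have hm₀t : Tendsto m₀ (nhds qc) (nhds (m₀ qc)) :=
    hm₀C3.continuousOn.continuousAt (hJopen.mem_nhds hqc)
  have hJev : ∀ᶠ q in nhds qc, q ∈ J := hJopen.mem_nhds hqc
  have hαc' : dM Fp qc (m₀ qc) 0 ≠ 0 := by rw [hα] at hαc; exact hαc
  have hβform : ∀ q, effCubic Fp Fm ((q, m₀ q, 0), (q, m₀ q, 0), (q, m₀ q, 0), (q, m₀ q, 0)) =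
      βeff q := by
    intro q
    rw [hβeff, hα, iteratedDeriv_succ, iteratedDeriv_succ, iteratedDeriv_one, iteratedDeriv_succ,
      iteratedDeriv_one]
    simp only [effCubic, dM, dD]
    ring
  obtain ⟨K, hK, hcomp⟩ := comparison hJopen hFpC3 hFmC3 hFpeven hFmodd hqc hαc' (hβform qc)
  have hβt : Tendsto βeff (nhds qc) (nhds (βeff qc)) := by
    refine Metric.tendsto_nhds.2 fun ε hε => ?_
    obtain ⟨r, hr, -, h⟩ := hcomp ε hε
    filter_upwards [Metric.ball_mem_nhds qc hr, Metric.tendsto_nhds.1 hm₀t r hr] with q h1 h2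
    have := h q (m₀ q) h1 h2
    rwa [hβform] at this
  obtain ⟨r, hr, mp, dp, hmain, hamp, hmid⟩ := pitchfork_core
    (Z := fun q m d => Fp q m d = 0) (H := fun q m d => dslope (Fm q m) 0 d) (m₀ := m₀) (μ := μ)
    hβc hK
    (fun ε hε => by
      obtain ⟨r, hr, h, -⟩ := hcomp ε hε
      exact ⟨r, hr, h⟩)
    (fun r hr => exists_zero_near hJopen hFpC3 hqc hαc' (hm₀ qc hqc) hr)
    hm₀t (hJev.mono hm₀) hμt (fun q => by rw [dslope_same, hμ])
  have hFm0 : ∀ q ∈ J, ∀ m, Fm q m 0 = 0 := fun q hq m => eq_zero_of_odd (hFmodd q hq m)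
  have hHF : ∀ q ∈ J, ∀ m d, 0 < d → (dslope (Fm q m) 0 d = 0 ↔ Fm q m d = 0) := by
    intro q hq m d hd
    rw [dslope_of_ne _ hd.ne', slope_def_field, hFm0 q hq, sub_zero, sub_zero]
    simp [hd.ne']
  obtain ⟨I, hI, hIo, hIc⟩ := eventually_nhds_iff.1 (hJev.and hmain)
  have hasymp : ∀ c > 0, ∀ᶠ q in nhdsWithin qc {q | q ∈ I ∧ 0 < μ q},
      |dp q - Real.sqrt (-(μ q) / βeff q)| ≤ c * Real.sqrt (μ q) := by
    intro c hc
    have h := amplitude_asymptotics hβc hβt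
      (hmain.mono fun q hq hμ0 => (hq.2.2.2 hμ0).1) hamp hc
    filter_upwards [mem_nhdsWithin_of_mem_nhds h, self_mem_nhdsWithin] with q h1 h2 using h1 h2.2
  have hbigO : (fun q => mp q - m₀ q) =O[nhdsWithin qc {q | q ∈ I ∧ 0 < μ q}] μ := by
    refine IsBigO.of_bound (K * (2 / -βeff qc)) ?_
    have hlt : 0 < -βeff qc := by linarith
    filter_upwards [mem_nhdsWithin_of_mem_nhds hmid,
      mem_nhdsWithin_of_mem_nhds (hamp (-βeff qc / 2) (by linarith)),
      self_mem_nhdsWithin] with q h1 h2 h3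
    obtain ⟨D, k1, k2⟩ := h2 h3.2
    rw [Real.norm_eq_abs, Real.norm_eq_abs, abs_of_pos h3.2, mul_assoc]
    refine (h1 h3.2).trans (mul_le_mul_of_nonneg_left ?_ hK)
    rw [abs_lt] at k1
    have : D * dp q ^ 2 ≤ βeff qc / 2 * dp q ^ 2 :=
      mul_le_mul_of_nonneg_right (by linarith) (by positivity)
    rw [div_mul_eq_mul_div, le_div_iff₀ hlt]
    linarith
  refine ⟨I, hIo, hIc, fun q hq => (hI q hq).1,
    Metric.ball (m₀ qc) r ×ˢ Metric.ball 0 r,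
    prod_mem_nhds (Metric.ball_mem_nhds _ hr) (Metric.ball_mem_nhds _ hr),
    mp, mp, dp, fun q => -dp q, fun q hq => ?_, ?_, ?_, hbigO, hbigO⟩
  · obtain ⟨hqJ, hm₀r, hzero, hpos, hsol⟩ := hI q hq
    -- every zero of the system, up to reflection in `d`
    have hcases : ∀ p ∈ Metric.ball (m₀ qc) r ×ˢ Metric.ball (0 : ℝ) r,
        Fp q p.1 p.2 = 0 → Fm q p.1 p.2 = 0 →
        p = (m₀ q, 0) ∨ (0 < μ q ∧ (p = (mp q, dp q) ∨ p = (mp q, -dp q))) := by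
      rintro ⟨m, d⟩ ⟨hm, hd⟩ hp hf
      simp only [Metric.mem_ball, Real.dist_eq, sub_zero] at hm hd hp hf
      rcases lt_trichotomy d 0 with h | h | h
      · right
        obtain ⟨u1, u2, u3⟩ := hpos m (-d) hm (by linarith) (by rwa [abs_of_neg h] at hd)
          (by rw [hFpeven q hqJ, hp])
          ((hHF q hqJ m _ (by linarith)).2 (by rw [hFmodd q hqJ, hf, neg_zero]))
        exact ⟨u1, Or.inr (Prod.ext u2 (by linarith))⟩
      · left
        subst h
        exact Prod.ext (hzero m hm hp) rfl
      · right
        obtain ⟨u1, u2, u3⟩ := hpos m d hm h (by rwa [abs_of_pos h] at hd) hp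
          ((hHF q hqJ m _ h).2 hf)
        exact ⟨u1, Or.inl (Prod.ext u2 u3)⟩
    refine ⟨fun hneg p hp hpz => ?_, fun hμ0 => ?_⟩
    · rcases hcases p hp hpz.1 hpz.2 with h | h
      · exact h
      · exact absurd h.1 hneg.le.not_gt
    · obtain ⟨s1, s2, s3, s4, s5⟩ := hsol hμ0
      rw [hHF q hqJ _ _ s1] at s5
      refine ⟨s1, neg_neg_of_pos s1, Set.ext fun p => ⟨fun hp => ?_, ?_⟩⟩
      · rcases hcases p hp.1 hp.2.1 hp.2.2 with h | ⟨-, h | h⟩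
        · exact Or.inl h
        · exact Or.inr (Or.inl h)
        · exact Or.inr (Or.inr h)
      · have hdabs : |dp q| < r := by rwa [abs_of_pos s1]
        rintro (rfl | rfl | rfl)
        · exact ⟨⟨by simpa [Real.dist_eq] using hm₀r, by simpa using hr⟩, hm₀ q hqJ,
            hFm0 q hqJ _⟩
        · exact ⟨⟨by simpa [Real.dist_eq] using s3, by simpa using hdabs⟩, s4, s5⟩
        · refine ⟨⟨by simpa [Real.dist_eq] using s3, by simpa using hdabs⟩, ?_, ?_⟩
          · simpa [hFpeven q hqJ] using s4
          · simpa [hFmodd q hqJ] using s5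
  · refine isLittleO_iff.2 fun c hc => ?_
    filter_upwards [hasymp c hc] with q h
    rwa [Real.norm_eq_abs, Real.norm_eq_abs, abs_of_nonneg (Real.sqrt_nonneg _)]
  · refine isLittleO_iff.2 fun c hc => ?_
    filter_upwards [hasymp c hc] with q h
    rwa [Real.norm_eq_abs, Real.norm_eq_abs, abs_of_nonneg (Real.sqrt_nonneg _), neg_add_eq_sub,
      abs_sub_comm]
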